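/- arXiv:2505.18626 — 2 statements merged into one kernel-verified Lean document; each statement's English description precedes it below -/
import Mathlib

section
/- A regular ω-language F ⊆ X^ω is of first Baire category in the Cantor space X^ω if and only if μ(F) = 0 for every Borel measure μ on X^ω with 0 < μ(X^ω) < ∞, with support supp(μ) = X^ω, and satisfying the balance condition. -/
open Set MeasureTheory Computability

namespace AutoBaire

/-- The Cantor topology on the space of ω-words over `X`:
the product of the discrete topology on `X`. -/
def cantorTop (X : Type) : TopologicalSpace (ℕ → X) :=
  @Pi.topologicalSpace ℕ (fun _ => X) (fun _ => ⊥)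

/-- The Borel σ-algebra of the Cantor space. -/
def cantorBorel (X : Type) : MeasurableSpace (ℕ → X) :=
  @borel (ℕ → X) (cantorTop X)

variable {X : Type}

/-- Concatenation `w·ξ` of a finite word with an ω-word. -/
def wcat (w : List X) (ξ : ℕ → X) : ℕ → X :=
  Stream'.appendStream' w ξ

/-- The ball (cylinder) `w·X^ω`. -/
def cyl (w : List X) : Set (ℕ → X) := {ξ | ∃ η : ℕ → X, ξ = wcat w η}

/-- The ω-language `W·A` for a language `W` and an ω-language `A`. -/
def catOmega (W : Language X) (A : Set (ℕ → X)) : Set (ℕ → X) :=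
  {ξ | ∃ w ∈ W, ∃ η ∈ A, ξ = wcat w η}

/-- `V^ω`: the set of ω-words that are infinite concatenations
`v₁·v₂·⋯` of non-empty words `vᵢ ∈ V`. -/
def omegaPow (V : Language X) : Set (ℕ → X) :=
  {ξ | ∃ f : ℕ → List X, (∀ i, f i ∈ V ∧ f i ≠ []) ∧
    ∀ k, ξ ∈ cyl (((List.range k).map f).flatten)}

/-- Regular languages: those obtained from finite languages via the operations
union, concatenation and star. -/
inductive IsRegLang : Language X → Prop
  | finite (W : Language X) : (W : Set (List X)).Finite → IsRegLang W
  | union (W V : Language X) : IsRegLang W → IsRegLang V → IsRegLang (W + V)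
  | concat (W V : Language X) : IsRegLang W → IsRegLang V → IsRegLang (W * V)
  | star (W : Language X) : IsRegLang W → IsRegLang (W∗)

/-- Regular ω-languages: finite unions `⋃ᵢ Wᵢ·Vᵢ^ω` with `Wᵢ, Vᵢ` regular. -/
def IsRegOmega (F : Set (ℕ → X)) : Prop :=
  ∃ (n : ℕ) (W V : Fin n → Language X),
    (∀ i, IsRegLang (W i) ∧ IsRegLang (V i)) ∧
    F = ⋃ i, catOmega (W i) (omegaPow (V i))

/-- `X*·w·X^ω`: the set of ω-words containing `w` as an infix. -/
def infixOcc (w : List X) : Set (ℕ → X) :=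
  {ξ | ∃ u : List X, ξ ∈ cyl (u ++ w)}

/-- An ω-word is disjunctive if every finite word occurs in it as an infix. -/
def Disjunctive (ξ : ℕ → X) : Prop := ∀ w : List X, ξ ∈ infixOcc w

/-- Ultimately periodic ω-words: `ξ = w·v·v·v·⋯` with `v ≠ e`. -/
def UltPeriodic (ξ : ℕ → X) : Prop :=
  ∃ (w v : List X) (h : v ≠ []), ξ = wcat w (Stream'.cycle v h)

/-- The Automatic Baire property: `F Δ E ⊆ F'` for some regular open
ω-language `E` and some regular ω-language `F'` of first Baire category. -/
def HasABP (F : Set (ℕ → X)) : Prop :=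
  ∃ E F' : Set (ℕ → X),
    IsRegOmega E ∧ @IsOpen _ (cantorTop X) E ∧
    IsRegOmega F' ∧ @IsMeagre _ (cantorTop X) F' ∧
    symmDiff F E ⊆ F'

/-- The measure is finite and non-null: `0 < μ(X^ω) < ∞`. -/
def FiniteNonNull (μ : @MeasureTheory.Measure (ℕ → X) (cantorBorel X)) : Prop :=
  0 < μ Set.univ ∧ μ Set.univ < ⊤

/-- `supp(μ) = X^ω`: every non-empty open set has positive measure. -/
def FullSupport (μ : @MeasureTheory.Measure (ℕ → X) (cantorBorel X)) : Prop :=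
  ∀ U : Set (ℕ → X), @IsOpen _ (cantorTop X) U → U.Nonempty → 0 < μ U

/-- The balance condition: there is `c > 0` such that for all `w ∈ X*`, `x ∈ X`
either `μ(wx·X^ω) = 0` or `c·μ(w·X^ω) ≤ μ(wx·X^ω)`. -/
def Balanced (μ : @MeasureTheory.Measure (ℕ → X) (cantorBorel X)) : Prop :=
  ∃ c : ENNReal, 0 < c ∧ ∀ (w : List X) (x : X),
    μ (cyl (w ++ [x])) = 0 ∨ c * μ (cyl w) ≤ μ (cyl (w ++ [x]))



/-- union of a set of languages -/
def uLang (S : Set (Language X)) : Language X := {z | ∃ L ∈ S, z ∈ L}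

theorem mem_uLang (S : Set (Language X)) (z : List X) : z ∈ uLang S ↔ ∃ L ∈ S, z ∈ L := Iff.rfl

theorem lq_concat (W V : Language X) (hW : (Set.range W.leftQuotient).Finite)
    (hV : (Set.range V.leftQuotient).Finite) : (Set.range (W * V).leftQuotient).Finite := by
  refine (Set.Finite.image2 (fun (A : Language X) (S : Set (Language X)) =>
    A * V + uLang S) hW hV.powerset).subset ?_
  rintro _ ⟨u, rfl⟩
  refine ⟨W.leftQuotient u, ⟨u, rfl⟩, {L | ∃ w v, w ∈ W ∧ u = w ++ v ∧ L = V.leftQuotient v},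
    ?_, ?_⟩
  · rintro _ ⟨w, v, -, -, rfl⟩
    exact ⟨v, rfl⟩
  · ext z
    rw [Language.mem_add, Language.mem_leftQuotient, Language.mem_mul, Language.mem_mul]
    constructor
    · rintro (⟨a, ha, b, hb, rfl⟩ | ⟨_, ⟨w, v, hw, rfl, rfl⟩, hz⟩)
      · exact ⟨u ++ a, ha, b, hb, by simp⟩
      · exact ⟨w, hw, v ++ z, hz, by simp⟩
    · rintro ⟨a, ha, b, hb, h⟩
      rw [List.append_eq_append_iff] at h
      rcases h with ⟨a', rfl, rfl⟩ | ⟨c, rfl, rfl⟩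
      · exact Or.inr ⟨_, ⟨a, a', ha, rfl, rfl⟩, hb⟩
      · exact Or.inl ⟨c, ha, b, hb, rfl⟩

theorem star_split (W : Language X) (L : List (List X)) (hL : ∀ y ∈ L, y ∈ W) :
    ∀ u z : List X, u ≠ [] → u ++ z = L.flatten →
      ∃ s v, s ∈ W∗ ∧ u = s ++ v ∧ ∃ c b, v ++ c ∈ W ∧ b ∈ W∗ ∧ z = c ++ b := by
  induction L with
  | nil => intro u z hu h; simp at h; exact absurd h.1 hu
  | cons a L ih =>
    intro u z hu h
    have ha : a ∈ W := hL a (by simp)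
    have hL' : ∀ y ∈ L, y ∈ W := fun y hy => hL y (by simp [hy])
    rw [List.flatten_cons, eq_comm, List.append_eq_append_iff] at h
    rcases h with ⟨a', rfl, h1⟩ | ⟨c, rfl, rfl⟩
    · by_cases hne : a' = []
      · subst hne
        refine ⟨[], a, Language.nil_mem_kstar _, by simp, [], z, by simpa using ha, ?_, rfl⟩
        have := Language.join_mem_kstar hL'
        rw [h1] at this
        simpa using this
      obtain ⟨s, v, hs, rfl, r⟩ := ih hL' a' z hne h1.symm
      refine ⟨a ++ s, v, ?_, by simp, r⟩
      rw [Language.mem_kstar] at hs ⊢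
      obtain ⟨M, rfl, hM⟩ := hs
      refine ⟨a :: M, by simp, ?_⟩
      intro y hy
      rcases List.mem_cons.1 hy with rfl | hy
      · exact ha
      · exact hM y hy
    · exact ⟨[], u, Language.nil_mem_kstar _, rfl, c, L.flatten, ha,
        Language.join_mem_kstar hL', rfl⟩

theorem append_mem_star {W : Language X} {a b : List X} (ha : a ∈ W∗) (hb : b ∈ W∗) :
    a ++ b ∈ W∗ := by
  rw [Language.mem_kstar] at *
  obtain ⟨L, rfl, hL⟩ := ha
  obtain ⟨M, rfl, hM⟩ := hb
  refine ⟨L ++ M, by simp, ?_⟩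
  intro y hy
  rcases List.mem_append.1 hy with h | h
  · exact hL y h
  · exact hM y h

theorem mem_star_of_mem {W : Language X} {a : List X} (ha : a ∈ W) : a ∈ W∗ := by
  rw [Language.mem_kstar]
  exact ⟨[a], by simp, by simpa using ha⟩

theorem lq_star (W : Language X) (hW : (Set.range W.leftQuotient).Finite) :
    (Set.range (W∗).leftQuotient).Finite := by
  refine ((hW.powerset.image (fun (S : Set (Language X)) =>
    uLang S * W∗)).insert (W∗)).subset ?_
  rintro _ ⟨u, rfl⟩
  by_cases hu : u = []
  · subst hu; exact Or.inl rfl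
  refine Or.inr ⟨{L | ∃ s v, s ∈ W∗ ∧ u = s ++ v ∧ L = W.leftQuotient v}, ?_, ?_⟩
  · rintro _ ⟨w, v, -, -, rfl⟩
    exact ⟨v, rfl⟩
  · ext z
    rw [Language.mem_leftQuotient, Language.mem_mul]
    constructor
    · rintro ⟨a, ⟨_, ⟨s, v, hs, rfl, rfl⟩, ha⟩, b, hb, rfl⟩
      have : s ++ ((v ++ a) ++ b) ∈ W∗ := append_mem_star hs (append_mem_star (mem_star_of_mem ha) hb)
      simpa using this
    · intro h
      rw [Language.mem_kstar] at h
      obtain ⟨L, h, hL⟩ := h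
      obtain ⟨s, v, hs, hu', c, b, hc, hb, rfl⟩ := star_split W L hL u z hu h
      exact ⟨c, ⟨_, ⟨s, v, hs, hu', rfl⟩, hc⟩, b, hb, rfl⟩

theorem reg_fin {W : Language X} (h : IsRegLang W) : (Set.range W.leftQuotient).Finite := by
  induction h with
  | finite W hW =>
    have h1 : (⋃ w ∈ (W : Set (List X)), {z : List X | z <:+ w}).Finite := by
      refine hW.biUnion fun w _ => ?_
      refine (List.finite_toSet w.tails).subset ?_
      intro z hz
      simpa using hz
    refine h1.powerset.subset ?_
    rintro _ ⟨u, rfl⟩ z hz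
    exact Set.mem_biUnion (show u ++ z ∈ (W : Set (List X)) from hz) ⟨u, rfl⟩
  | union W V _ _ hW hV =>
    refine (Set.Finite.image2 (fun A B : Language X => A + B) hW hV).subset ?_
    rintro _ ⟨u, rfl⟩
    exact ⟨_, ⟨u, rfl⟩, _, ⟨u, rfl⟩, rfl⟩
  | concat W V _ _ hW hV => exact lq_concat W V hW hV
  | star W _ hW => exact lq_star W hW

theorem lq_bound (L : Language X) (hL : (Set.range L.leftQuotient).Finite)
    (R : Language X → List X → Prop) (h : ∀ u, ∃ y, R (L.leftQuotient u) y) :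
    ∃ k, ∀ u, ∃ y : List X, y.length ≤ k ∧ R (L.leftQuotient u) y := by
  classical
  have h' : ∀ A : Language X, ∃ y, A ∈ Set.range L.leftQuotient → R A y := by
    intro A
    by_cases hA : A ∈ Set.range L.leftQuotient
    · obtain ⟨u, rfl⟩ := hA
      obtain ⟨y, hy⟩ := h u
      exact ⟨y, fun _ => hy⟩
    · exact ⟨[], fun h => absurd h hA⟩
  choose Y hY using h'
  obtain ⟨k, hk⟩ := (hL.image (fun A => (Y A).length)).bddAbove
  exact ⟨k, fun u => ⟨Y _, hk ⟨_, ⟨u, rfl⟩, rfl⟩, hY _ ⟨u, rfl⟩⟩⟩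

theorem wcat_append (u v : List X) (ξ : ℕ → X) : wcat (u ++ v) ξ = wcat u (wcat v ξ) :=
  Stream'.append_append_stream u v ξ

theorem wcat_inj {u : List X} {a b : ℕ → X} (h : wcat u a = wcat u b) : a = b :=
  Stream'.append_right_injective u a b h

theorem wcat_comparable : ∀ {u w : List X} {a b : ℕ → X}, wcat u a = wcat w b →
    (∃ y, w = u ++ y ∧ a = wcat y b) ∨ (∃ y, u = w ++ y ∧ b = wcat y a)
  | [], w, a, b, h => Or.inl ⟨w, rfl, h⟩
  | x :: u, [], a, b, h => Or.inr ⟨x :: u, rfl, h.symm⟩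
  | x :: u, z :: w, a, b, h => by
    have h1 : x = z := congrFun h 0
    have h2 : wcat u a = wcat w b := funext fun n => congrFun h (n+1)
    subst h1
    rcases wcat_comparable h2 with ⟨y, rfl, h3⟩ | ⟨y, rfl, h3⟩
    · exact Or.inl ⟨y, rfl, h3⟩
    · exact Or.inr ⟨y, rfl, h3⟩

/-- boundedly dense sets of words -/
def BD (P : Set (List X)) : Prop := ∃ k : ℕ, ∀ u, ∃ y : List X, y.length ≤ k ∧ u ++ y ∈ P

/-- filters of large sets -/
structure Good (l : Filter (ℕ → X)) : Prop where
  cif : CountableInterFilter l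
  hit : ∀ P : Set (List X), BD P → {ξ | ∃ p ∈ P, ξ ∈ cyl p} ∈ l
  ncyl : ∀ w : List X, (cyl w)ᶜ ∉ l

theorem Good.rel {l : Filter (ℕ → X)} (hl : Good l) {P : Set (List X)} (hP : BD P) (w : List X) :
    ∀ᶠ ξ in l, ∀ η, ξ = wcat w η → ∃ p ∈ P, η ∈ cyl p := by
  obtain ⟨k, hk⟩ := hP
  have : BD {p : List X | (∃ q ∈ P, p = w ++ q) ∨ ∀ a b, wcat p a ≠ wcat w b} := by
    refine ⟨w.length + k, fun u => ?_⟩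
    by_cases h1 : ∃ y, w = u ++ y
    · obtain ⟨y, rfl⟩ := h1
      obtain ⟨z, hz, hzP⟩ := hk []
      refine ⟨y ++ z, by simp; omega, Or.inl ⟨z, by simpa using hzP, by simp⟩⟩
    by_cases h2 : ∃ y, u = w ++ y
    · obtain ⟨y, rfl⟩ := h2
      obtain ⟨z, hz, hzP⟩ := hk y
      exact ⟨z, by omega, Or.inl ⟨_, hzP, by simp⟩⟩
    refine ⟨[], by simp, Or.inr ?_⟩
    intro a b h
    rw [List.append_nil] at h
    rcases wcat_comparable h with ⟨y, h, -⟩ | ⟨y, h, -⟩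
    · exact h1 ⟨y, h⟩
    · exact h2 ⟨y, h⟩
  filter_upwards [hl.hit _ this]
  rintro ξ ⟨p, hp, a, rfl⟩ η h
  rcases hp with ⟨q, hq, rfl⟩ | hp
  · rw [wcat_append] at h
    exact ⟨q, hq, a, (wcat_inj h).symm⟩
  · exact absurd h (hp _ _)

/-- every word can be extended out of the prefixes of `V∗` -/
def CA (V : Language X) : Prop := ∀ u : List X, ∃ y, ∀ z, u ++ y ++ z ∉ V∗

theorem flatten_facts (V : Language X) (f : ℕ → List X) (hf : ∀ i, f i ∈ V ∧ f i ≠ []) (k : ℕ) :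
    ((List.range k).map f).flatten ∈ V∗ ∧ k ≤ ((List.range k).map f).flatten.length := by
  constructor
  · refine Language.join_mem_kstar ?_
    intro y hy
    obtain ⟨i, -, rfl⟩ := List.mem_map.1 hy
    exact (hf i).1
  · induction k with
    | zero => simp
    | succ k ih =>
      have := List.length_pos_of_ne_nil (hf k).2
      rw [List.range_succ]
      simp only [List.map_append, List.flatten_append, List.length_append, List.map_cons,
        List.map_nil, List.flatten_cons, List.flatten_nil, List.append_nil]
      omega

theorem caseA [Countable X] {l : Filter (ℕ → X)} (hl : Good l) (W V : Language X)
    (hV : IsRegLang V) (h : CA V) : (catOmega W (omegaPow V))ᶜ ∈ l := by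
  have := hl.cif
  have hBD : BD {p : List X | ∀ z, p ++ z ∉ V∗} := by
    obtain ⟨k, hk⟩ := lq_bound (V∗) (reg_fin (IsRegLang.star V hV)) (fun A y => ∀ z, y ++ z ∉ A)
      (fun u => by
        obtain ⟨y, hy⟩ := h u
        refine ⟨y, fun z hz => hy z ?_⟩
        rw [Language.mem_leftQuotient] at hz
        simpa using hz)
    refine ⟨k, fun u => ?_⟩
    obtain ⟨y, hy, hy'⟩ := hk u
    refine ⟨y, hy, fun z hz => hy' z ?_⟩
    rw [Language.mem_leftQuotient]
    simpa using hz
  have := eventually_countable_forall.2 (fun w : List X => hl.rel hBD w)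
  filter_upwards [this]
  rintro ξ hξ ⟨w, -, η, ⟨f, hf, hη⟩, rfl⟩
  obtain ⟨p, hp, a, ha⟩ := hξ w η rfl
  obtain ⟨b, hb⟩ := hη p.length
  obtain ⟨h1, h2⟩ := flatten_facts V f hf p.length
  rw [ha] at hb
  rcases wcat_comparable hb with ⟨y, h, -⟩ | ⟨y, h, -⟩
  · rw [h] at h1
    exact hp y h1
  · have : y = [] := by
      have := congrArg List.length h
      rw [List.length_append] at this
      exact List.eq_nil_of_length_eq_zero (by omega)
    subst this
    rw [List.append_nil] at h
    rw [← h] at h1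
    exact hp [] (by simpa using h1)

theorem omega_of_step (V : Language X) (η : ℕ → X) (R : List X → Prop) (h0 : R [])
    (hR : ∀ s, R s → η ∈ cyl s) (hs : ∀ s, R s → ∃ a ∈ V, a ≠ [] ∧ R (s ++ a)) :
    η ∈ omegaPow V := by
  choose! g hgV hgn hgR using hs
  let S : ℕ → List X := fun n => Nat.rec [] (fun _ s => s ++ g s) n
  have hS : ∀ n, R (S n) := by
    intro n
    induction n with
    | zero => exact h0
    | succ n ih => exact hgR _ ih
  refine ⟨fun n => g (S n), fun i => ⟨hgV _ (hS i), hgn _ (hS i)⟩, fun k => ?_⟩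
  have : ((List.range k).map (fun n => g (S n))).flatten = S k := by
    induction k with
    | zero => rfl
    | succ k ih =>
      rw [List.range_succ, List.map_append, List.flatten_append, ih]
      simp [S]
  rw [this]
  exact hR _ (hS k)

theorem caseB [Countable X] [Nonempty X] {l : Filter (ℕ → X)} (hl : Good l) (W V : Language X)
    (hV : IsRegLang V) (h : ¬ CA V) (w : List X) (hw : w ∈ W) :
    (catOmega W (omegaPow V))ᶜ ∉ l := by
  have := hl.cif
  intro hc
  simp only [CA, not_forall, not_exists, not_not] at h
  obtain ⟨v0, hv0⟩ := h
  obtain ⟨x⟩ := ‹Nonempty X›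
  obtain ⟨v, hvn, hv⟩ : ∃ v : List X, v ≠ [] ∧ ∀ y, ∃ z, v ++ y ++ z ∈ V∗ :=
    ⟨v0 ++ [x], by simp, fun y => by simpa using hv0 (x :: y)⟩
  have hBD : BD {p : List X | ∃ q, v ++ q ∈ V∗ ∧ p = q ++ v} := by
    obtain ⟨k, hk⟩ := lq_bound (V∗) (reg_fin (IsRegLang.star V hV))
      (fun A y => (∃ u, A = (V∗).leftQuotient (v ++ u)) → y ∈ A)
      (fun u => by
        by_cases h : ∃ u', (V∗).leftQuotient u = (V∗).leftQuotient (v ++ u')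
        · obtain ⟨u', hu'⟩ := h
          obtain ⟨z, hz⟩ := hv u'
          exact ⟨z, fun _ => by rw [hu']; exact hz⟩
        · exact ⟨[], fun h' => absurd h' h⟩)
    refine ⟨k + v.length, fun u => ?_⟩
    obtain ⟨y, hy, hy'⟩ := hk (v ++ u)
    refine ⟨y ++ v, by simp; omega, u ++ y, ?_, by simp⟩
    have := hy' ⟨u, rfl⟩
    rw [Language.mem_leftQuotient] at this
    simpa using this
  have := eventually_countable_forall.2 (fun s : List X => hl.rel hBD (w ++ (s ++ v)))
  refine hl.ncyl (w ++ v) ?_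
  filter_upwards [this, hc]
  rintro _ hξ hξ2 ⟨η, rfl⟩
  refine hξ2 ⟨w, hw, wcat v η, ?_, wcat_append _ _ _⟩
  rw [wcat_append] at hξ
  refine omega_of_step V _ (fun s => ∃ L : List (List X), (∀ a ∈ L, a ∈ V ∧ a ≠ []) ∧
    wcat v η ∈ cyl (s ++ L.flatten ++ v)) ⟨[], by simp, ⟨η, rfl⟩⟩ ?_ ?_
  · rintro s ⟨L, -, a, ha⟩
    exact ⟨_, by rw [ha, List.append_assoc, wcat_append]⟩
  · have emit : ∀ s (L : List (List X)), L ≠ [] → (∀ a ∈ L, a ∈ V ∧ a ≠ []) →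
        wcat v η ∈ cyl (s ++ L.flatten ++ v) → ∃ a ∈ V, a ≠ [] ∧ ∃ L : List (List X),
          (∀ a ∈ L, a ∈ V ∧ a ≠ []) ∧ wcat v η ∈ cyl (s ++ a ++ L.flatten ++ v) := by
      intro s L hne hL hm
      cases L with
      | nil => exact absurd rfl hne
      | cons a L =>
        refine ⟨a, (hL a (by simp)).1, (hL a (by simp)).2, L, fun b hb => hL b (by simp [hb]), ?_⟩
        simpa using hm
    rintro s ⟨L, hL, hm⟩
    by_cases hne : L = []
    · subst hne
      obtain ⟨η', hη'⟩ := hm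
      simp only [List.flatten_nil, List.append_nil] at hη'
      obtain ⟨p, ⟨q, hq, rfl⟩, b, rfl⟩ := hξ s η' (by rw [wcat_append w, ← hη'])
      rw [Language.mem_kstar_iff_exists_nonempty] at hq
      obtain ⟨M, hM, hM'⟩ := hq
      refine emit s M ?_ hM' ⟨b, ?_⟩
      · rintro rfl
        simp at hM
        exact hvn hM.1
      · rw [hη', ← wcat_append, ← hM]
        simp
    · exact emit s L hne hL hm

theorem key [Countable X] [Nonempty X] {l : Filter (ℕ → X)} (hl : Good l) {n : ℕ}
    (W V : Fin n → Language X) (hV : ∀ i, IsRegLang (V i)) :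
    (⋃ i, catOmega (W i) (omegaPow (V i)))ᶜ ∈ l ↔ ∀ i, (∃ w, w ∈ W i) → CA (V i) := by
  constructor
  · rintro h i ⟨w, hw⟩
    by_contra hn
    refine caseB hl (W i) (V i) (hV i) hn w hw (Filter.mem_of_superset h ?_)
    exact Set.compl_subset_compl.2 (Set.subset_iUnion (fun i => catOmega (W i) (omegaPow (V i))) i)
  · intro h
    rw [Set.compl_iUnion, Filter.iInter_mem]
    intro i
    by_cases hw : ∃ w, w ∈ W i
    · exact caseA hl _ _ (hV i) (h i hw)
    · refine Filter.mem_of_superset Filter.univ_mem ?_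
      rintro ξ - ⟨w, hw', -⟩
      exact hw ⟨w, hw'⟩

theorem real_drop [Fintype X] (m b : List X → ℝ) (hm : ∀ u, m u = ∑ a, m (u ++ [a]))
    (hb : ∀ u, b u = ∑ a, b (u ++ [a])) (b0 : ∀ u, 0 ≤ b u) (bm : ∀ u, b u ≤ m u)
    (c : ℝ) (c0 : 0 < c) (c1 : c ≤ 1) (hc : ∀ u a, c * m u ≤ m (u ++ [a]))
    (k : ℕ) (hk : ∀ u, ∃ y : List X, y.length ≤ k ∧ b (u ++ y) = 0) : b [] = 0 := by
  classical
  have m0 : ∀ u, 0 ≤ m u := fun u => (b0 u).trans (bm u)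
  have h1 : ∀ (y u : List X), c ^ y.length * m u ≤ m (u ++ y) := by
    intro y
    induction y with
    | nil => intro u; simp
    | cons a y ih =>
      intro u
      have h := ih (u ++ [a])
      rw [List.append_assoc, List.singleton_append] at h
      refine le_trans ?_ h
      rw [List.length_cons, pow_succ, mul_assoc]
      exact mul_le_mul_of_nonneg_left (hc u a) (by positivity)
  have h2 : ∀ θ : ℝ, (∀ u, b u ≤ θ * m u) → ∀ (y u : List X), b (u ++ y) = 0 →
      b u + θ * m (u ++ y) ≤ θ * m u := by
    intro θ hθ y
    induction y with
    | nil => intro u hu; rw [List.append_nil] at *; rw [hu, zero_add]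
    | cons a y ih =>
      intro u hu
      have e : u ++ a :: y = (u ++ [a]) ++ y := by simp
      rw [e] at hu ⊢
      have h := ih _ hu
      rw [hb u, hm u, Finset.mul_sum, ← Finset.add_sum_erase _ _ (Finset.mem_univ a),
        ← Finset.add_sum_erase _ (fun i => θ * m (u ++ [i])) (Finset.mem_univ a)]
      have : ∑ x ∈ Finset.univ.erase a, b (u ++ [x]) ≤
          ∑ x ∈ Finset.univ.erase a, θ * m (u ++ [x]) :=
        Finset.sum_le_sum fun x _ => hθ _
      linarith
  have ck0 : 0 < c ^ k := by positivity
  have ck1 : c ^ k ≤ 1 := pow_le_one₀ c0.le c1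
  have h3 : ∀ n : ℕ, ∀ u, b u ≤ (1 - c ^ k) ^ n * m u := by
    intro n
    induction n with
    | zero => intro u; simpa using bm u
    | succ n ih =>
      intro u
      obtain ⟨y, hy, hy0⟩ := hk u
      have h := h2 _ ih y u hy0
      have hmy : c ^ k * m u ≤ m (u ++ y) :=
        (mul_le_mul_of_nonneg_right (pow_le_pow_of_le_one c0.le c1 hy) (m0 u)).trans (h1 y u)
      have hp : 0 ≤ (1 - c ^ k) ^ n := pow_nonneg (by linarith) n
      have := mul_le_mul_of_nonneg_left hmy hp
      rw [pow_succ]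
      nlinarith
  have h4 : Filter.Tendsto (fun n : ℕ => (1 - c ^ k) ^ n * m []) Filter.atTop (nhds (0 * m [])) :=
    (tendsto_pow_atTop_nhds_zero_of_lt_one (by linarith) (by linarith)).mul_const _
  rw [zero_mul] at h4
  exact le_antisymm (ge_of_tendsto' h4 fun n => h3 n []) (b0 [])

theorem mem_cyl_iff : ∀ (w : List X) (ξ : ℕ → X),
    ξ ∈ cyl w ↔ ∀ i (h : i < w.length), ξ i = w[i]
  | [], ξ => by
    constructor
    · intro _ i h; simp at h
    · intro _; exact ⟨ξ, rfl⟩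
  | x :: w, ξ => by
    have e : ξ ∈ cyl (x :: w) ↔ ξ 0 = x ∧ (fun n => ξ (n+1)) ∈ cyl w := by
      constructor
      · rintro ⟨η, rfl⟩
        exact ⟨rfl, η, rfl⟩
      · rintro ⟨h0, η, h⟩
        refine ⟨η, funext fun n => ?_⟩
        cases n with
        | zero => exact h0
        | succ n => exact congrFun h n
    rw [e, mem_cyl_iff w]
    constructor
    · rintro ⟨h0, h⟩ i hi
      cases i with
      | zero => exact h0
      | succ n => exact h n (by simpa using hi)
    · intro h
      exact ⟨h 0 (by simp), fun i hi => h (i+1) (by simpa using hi)⟩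

theorem cyl_eq_pi (w : List X) : cyl w =
    Set.pi (Finset.range w.length : Set ℕ) (fun i => {a | ∀ h : i < w.length, a = w[i]}) := by
  ext ξ
  rw [mem_cyl_iff]
  constructor
  · intro h i _ hi; exact h i hi
  · intro h i hi; exact h i (by simpa using hi) hi

theorem cyl_nonempty [Nonempty X] (w : List X) : (cyl w).Nonempty :=
  ⟨wcat w (fun _ => Classical.arbitrary X), _, rfl⟩

theorem cyl_nil : cyl ([] : List X) = Set.univ :=
  Set.eq_univ_of_forall fun ξ => ⟨ξ, rfl⟩

theorem cyl_split (u : List X) : cyl u = ⋃ a : X, cyl (u ++ [a]) := by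
  ext ξ
  rw [Set.mem_iUnion]
  constructor
  · rintro ⟨η, rfl⟩
    refine ⟨η 0, fun n => η (n+1), ?_⟩
    rw [wcat_append]
    congr 1
    funext n
    cases n <;> rfl
  · rintro ⟨a, η, rfl⟩
    exact ⟨_, wcat_append _ _ _⟩

theorem cyl_disj (u : List X) : Pairwise (Function.onFun Disjoint fun a : X => cyl (u ++ [a])) := by
  intro a b hab
  rw [Function.onFun, Set.disjoint_left]
  rintro ξ h1 h2
  rw [mem_cyl_iff] at h1 h2
  have e1 := h1 u.length (by simp)
  have e2 := h2 u.length (by simp)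
  rw [e1] at e2
  simp at e2
  exact hab e2

section top
variable [TopologicalSpace X] [DiscreteTopology X]

theorem cyl_open (w : List X) : IsOpen (cyl w) := by
  rw [cyl_eq_pi]
  exact isOpen_set_pi (Finset.finite_toSet _) fun _ _ => isOpen_discrete _

theorem cyl_basis {U : Set (ℕ → X)} (hU : IsOpen U) {ξ : ℕ → X} (h : ξ ∈ U) :
    ∃ w, ξ ∈ cyl w ∧ cyl w ⊆ U := by
  rw [isOpen_pi_iff] at hU
  obtain ⟨I, u, hu, hI⟩ := hU ξ h
  refine ⟨(List.range (I.sup id + 1)).map ξ, ?_, fun η hη => hI ?_⟩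
  · rw [mem_cyl_iff]; intro i hi; simp
  · intro i hi
    rw [mem_cyl_iff] at hη
    have : i ≤ I.sup id := Finset.le_sup (f := id) hi
    have := hη i (by simp; omega)
    simp at this
    rw [this]
    exact (hu i hi).2

theorem hit_open (P : Set (List X)) : IsOpen {ξ : ℕ → X | ∃ p ∈ P, ξ ∈ cyl p} := by
  have : {ξ : ℕ → X | ∃ p ∈ P, ξ ∈ cyl p} = ⋃ p ∈ P, cyl p := by ext; simp
  rw [this]
  exact isOpen_biUnion fun p _ => cyl_open p

theorem good_residual [Finite X] [Nonempty X] : Good (residual (ℕ → X)) where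
  cif := inferInstance
  hit P := by
    rintro ⟨k, hk⟩
    refine residual_of_dense_open (hit_open P) ?_
    rw [dense_iff_inter_open]
    rintro U hU ⟨ξ, hξ⟩
    obtain ⟨w, -, hw⟩ := cyl_basis hU hξ
    obtain ⟨y, -, hy⟩ := hk w
    obtain ⟨η, hη⟩ := cyl_nonempty (w ++ y)
    refine ⟨η, hw ?_, _, hy, hη⟩
    obtain ⟨a, rfl⟩ := hη
    exact ⟨_, wcat_append _ _ _⟩
  ncyl w h := by
    have h1 := dense_of_mem_residual h
    obtain ⟨ξ, h2, h3⟩ := h1.inter_open_nonempty _ (cyl_open w) (cyl_nonempty w)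
    exact h3 h2

theorem good_ae [Fintype X] [Nonempty X] [MeasurableSpace (ℕ → X)] [BorelSpace (ℕ → X)]
    (μ : Measure (ℕ → X)) (hfin : μ Set.univ < ⊤)
    (hsupp : ∀ U : Set (ℕ → X), IsOpen U → U.Nonempty → 0 < μ U)
    (hbal : ∃ c : ENNReal, 0 < c ∧ ∀ (w : List X) (x : X),
      μ (cyl (w ++ [x])) = 0 ∨ c * μ (cyl w) ≤ μ (cyl (w ++ [x]))) : Good (ae μ) where
  cif := inferInstance
  hit P := by
    rintro ⟨k, hk⟩
    have : IsFiniteMeasure μ := ⟨hfin⟩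
    set B : Set (ℕ → X) := {ξ : ℕ → X | ∃ p ∈ P, ξ ∈ cyl p}ᶜ with hB
    have hBm : MeasurableSet B := (hit_open P).measurableSet.compl
    have hcm : ∀ u : List X, MeasurableSet (cyl u) := fun u => (cyl_open u).measurableSet
    have pos : ∀ u : List X, 0 < μ (cyl u) := fun u => hsupp _ (cyl_open u) (cyl_nonempty u)
    obtain ⟨c, c0, hc⟩ := hbal
    have c0' : 0 < min c 1 := lt_min c0 one_pos
    have ct : min c 1 ≠ ⊤ := ne_top_of_le_ne_top ENNReal.one_ne_top (min_le_right _ _)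
    have key := real_drop (fun u => μ.real (cyl u)) (fun u => μ.real (B ∩ cyl u))
      (fun u => by
        conv_lhs => rw [cyl_split u]
        exact measureReal_iUnion_fintype (cyl_disj u) (fun a => hcm _))
      (fun u => by
        conv_lhs => rw [cyl_split u, Set.inter_iUnion]
        exact measureReal_iUnion_fintype
          (fun a b hab => ((cyl_disj u) hab).mono Set.inter_subset_right Set.inter_subset_right)
          (fun a => hBm.inter (hcm _)))
      (fun u => measureReal_nonneg)
      (fun u => measureReal_mono Set.inter_subset_right)
      (min c 1).toReal (ENNReal.toReal_pos c0'.ne' ct)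
      (by simpa using ENNReal.toReal_mono ENNReal.one_ne_top (min_le_right c 1))
      (fun u a => by
        simp only [Measure.real]
        rw [← ENNReal.toReal_mul]
        refine ENNReal.toReal_mono (measure_ne_top _ _) ?_
        rcases hc u a with h | h
        · exact absurd h (pos _).ne'
        · exact (mul_le_mul_left (min_le_left c 1) _).trans h)
      k
      (fun u => by
        obtain ⟨y, hy, hyP⟩ := hk u
        refine ⟨y, hy, ?_⟩
        have : B ∩ cyl (u ++ y) = ∅ := by
          ext ξ
          simp only [hB, Set.mem_inter_iff, Set.mem_compl_iff, Set.mem_ofPred_eq,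
            Set.mem_empty_iff_false, iff_false, not_and]
          intro h1 h2
          exact h1 ⟨_, hyP, h2⟩
        simp [this])
    simp only [cyl_nil, Set.inter_univ] at key
    rw [mem_ae_iff]
    exact (measureReal_eq_zero_iff).1 key
  ncyl w h := by
    rw [mem_ae_iff, compl_compl] at h
    exact (hsupp _ (cyl_open w) (cyl_nonempty w)).ne' h

theorem exists_good [Fintype X] [Nonempty X] [MeasurableSpace X] [BorelSpace X] :
    ∃ μ : Measure (ℕ → X), (0 < μ Set.univ ∧ μ Set.univ < ⊤) ∧
    (∀ U : Set (ℕ → X), IsOpen U → U.Nonempty → 0 < μ U) ∧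
    (∃ c : ENNReal, 0 < c ∧ ∀ (w : List X) (x : X),
      μ (cyl (w ++ [x])) = 0 ∨ c * μ (cyl w) ≤ μ (cyl (w ++ [x]))) := by
  classical
  let ν : Measure X := (PMF.uniformOfFintype X).toMeasure
  have hν : ∀ a, ν {a} = (Fintype.card X : ENNReal)⁻¹ := by
    intro a
    rw [PMF.toMeasure_apply_singleton _ _ (measurableSet_singleton a)]
    simp
  have hc : ∀ w : List X, Measure.infinitePi (fun _ : ℕ => ν) (cyl w) =
      ((Fintype.card X : ENNReal)⁻¹) ^ w.length := by
    intro w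
    rw [cyl_eq_pi, Measure.infinitePi_pi]
    · rw [Finset.prod_congr rfl (g := fun _ => (Fintype.card X : ENNReal)⁻¹)]
      · simp
      · intro i hi
        have hi' : i < w.length := by simpa using hi
        rw [← hν w[i]]
        congr 1
        ext a
        simp [hi']
    · intro i _
      exact (isOpen_discrete _).measurableSet
  have hp : (0 : ENNReal) < (Fintype.card X : ENNReal)⁻¹ := by simp
  refine ⟨Measure.infinitePi (fun _ : ℕ => ν), by simp, ?_, (Fintype.card X : ENNReal)⁻¹, hp, ?_⟩
  · rintro U hU ⟨ξ, hξ⟩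
    obtain ⟨w, -, hw⟩ := cyl_basis hU hξ
    refine lt_of_lt_of_le ?_ (measure_mono hw)
    rw [hc]
    exact ENNReal.pow_pos hp _
  · intro w x
    right
    rw [hc, hc, List.length_append, List.length_singleton, pow_succ, mul_comm]

end top

theorem stmt6 {X : Type} [Fintype X] (hX : 2 ≤ Fintype.card X)
    (F : Set (ℕ → X)) (hreg : IsRegOmega F) :
    @IsMeagre _ (cantorTop X) F ↔
      ∀ μ : @MeasureTheory.Measure (ℕ → X) (cantorBorel X),
        FiniteNonNull μ → FullSupport μ → Balanced μ → μ F = 0 := by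
  have hne : Nonempty X := Fintype.card_pos_iff.1 (by omega)
  letI t : TopologicalSpace X := ⊥
  haveI : DiscreteTopology X := ⟨rfl⟩
  letI m1 : MeasurableSpace X := borel X
  haveI : BorelSpace X := ⟨rfl⟩
  obtain ⟨n, W, V, hWV, rfl⟩ := hreg
  have hV := fun i => (hWV i).2
  have hmeas : cantorBorel X = MeasurableSpace.pi :=
    (Pi.borelSpace (X := fun _ : ℕ => X)).measurable_eq.symm
  have hA := key (good_residual (X := X)) W V hV
  have hB : ∀ μ : @MeasureTheory.Measure (ℕ → X) (cantorBorel X),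
        FiniteNonNull μ → FullSupport μ → Balanced μ →
        (μ (⋃ i, catOmega (W i) (omegaPow (V i))) = 0 ↔ ∀ i, (∃ w, w ∈ W i) → CA (V i)) := by
    intro μ h1 h2 h3
    have hg := @good_ae X _ _ _ _ (cantorBorel X) (@BorelSpace.mk _ _ (cantorBorel X) rfl) μ
      h1.2 h2 h3
    rw [← key hg W V hV, mem_ae_iff, compl_compl]
  have hE : ∃ μ : @MeasureTheory.Measure (ℕ → X) (cantorBorel X),
      FiniteNonNull μ ∧ FullSupport μ ∧ Balanced μ := by
    unfold FiniteNonNull FullSupport Balanced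
    rw [hmeas]
    exact exists_good
  constructor
  · intro h μ h1 h2 h3
    exact (hB μ h1 h2 h3).2 (hA.1 h)
  · intro h
    obtain ⟨μ, h1, h2, h3⟩ := hE
    exact hA.2 ((hB μ h1 h2 h3).1 (h μ h1 h2 h3))

end AutoBaire
end

section
/- Let F ⊆ X^ω be a regular ω-language. If there is some Borel measure μ on X^ω with 0 < μ(X^ω) < ∞, with support supp(μ) = X^ω, satisfying the balance condition, such that μ(F) = 0, then F is of first Baire category in the Cantor space X^ω. -/
open Set MeasureTheory Computability

namespace AutoBaire

variable {X : Type}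

def FinRes (L : Language X) : Prop := (Set.range L.leftQuotient).Finite

lemma finRes_finite (W : Language X) (h : (W : Set (List X)).Finite) : FinRes W := by
  have hS : (⋃ x ∈ (W : Set (List X)), {y | y ∈ x.tails}).Finite :=
    h.biUnion fun x _ => List.finite_toSet x.tails
  refine (hS.finite_subsets).subset ?_
  rintro _ ⟨v, rfl⟩
  intro y hy
  refine Set.mem_biUnion (x := v ++ y) hy ?_
  show y ∈ (v ++ y).tails
  rw [List.mem_tails]
  exact List.suffix_append v y

lemma finRes_union (W V : Language X) (hW : FinRes W) (hV : FinRes V) : FinRes (W + V) := by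
  refine (Set.Finite.image2 (fun a b => a + b) hW hV).subset ?_
  rintro _ ⟨v, rfl⟩
  exact ⟨_, ⟨v, rfl⟩, _, ⟨v, rfl⟩, rfl⟩

lemma finRes_concat (W V : Language X) (hW : FinRes W) (hV : FinRes V) : FinRes (W * V) := by
  refine (Set.Finite.image2 (fun (q : Language X) (T : Set (Language X)) =>
    (({y | y ∈ q * V ∨ ∃ r ∈ T, y ∈ r} : Set (List X)) : Language X)) hW hV.finite_subsets).subset ?_
  rintro _ ⟨v, rfl⟩
  refine ⟨_, ⟨v, rfl⟩, {r | ∃ a b, v = a ++ b ∧ a ∈ W ∧ r = V.leftQuotient b}, ?_, ?_⟩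
  · rintro _ ⟨a, b, -, -, rfl⟩
    exact ⟨b, rfl⟩
  · apply Language.ext
    intro y
    rw [Language.mem_leftQuotient]
    show (y ∈ W.leftQuotient v * V ∨ _) ↔ _
    rw [Language.mem_mul, Language.mem_mul]
    constructor
    · rintro (⟨a, ha, b, hb, rfl⟩ | ⟨_, ⟨a, b, rfl, ha, rfl⟩, hy⟩)
      · exact ⟨v ++ a, ha, b, hb, by simp⟩
      · exact ⟨a, ha, b ++ y, hy, by simp⟩
    · rintro ⟨a, ha, b, hb, hab⟩
      rcases List.append_eq_append_iff.1 hab with ⟨c, h1, h2⟩ | ⟨c, h1, h2⟩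
      · right
        refine ⟨_, ⟨a, c, h1, ha, rfl⟩, ?_⟩
        rw [Language.mem_leftQuotient, ← h2]; exact hb
      · left
        refine ⟨c, ?_, b, hb, h2.symm⟩
        rw [Language.mem_leftQuotient, ← h1]; exact ha

lemma kstar_append {V : Language X} {a b : List X} (ha : a ∈ V∗) (hb : b ∈ V∗) : a ++ b ∈ V∗ := by
  obtain ⟨l, rfl, hl⟩ := Language.mem_kstar.1 ha
  obtain ⟨m, rfl, hm⟩ := Language.mem_kstar.1 hb
  rw [← List.flatten_append]
  refine Language.join_mem_kstar fun y hy => ?_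
  rcases List.mem_append.1 hy with h | h
  · exact hl y h
  · exact hm y h

lemma mem_kstar_self {V : Language X} {a : List X} (ha : a ∈ V) : a ∈ V∗ := by
  have := Language.join_mem_kstar (l := V) (L := [a]) (by simpa using ha)
  simpa using this

lemma kstar_split (V : Language X) (l : List (List X)) (hl : ∀ y ∈ l, y ∈ V) :
    ∀ v y : List X, v ++ y = l.flatten → (v ∈ V∗ ∧ y ∈ V∗) ∨
      ∃ a b, v = a ++ b ∧ a ∈ V∗ ∧ ∃ y1 y2, y = y1 ++ y2 ∧ b ++ y1 ∈ V ∧ y2 ∈ V∗ := by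
  induction l with
  | nil =>
    intro v y h
    simp at h
    left
    rw [h.1, h.2]
    exact ⟨Language.nil_mem_kstar V, Language.nil_mem_kstar V⟩
  | cons x l ih =>
    intro v y h
    have hx : x ∈ V := hl x (by simp)
    have hl' : ∀ y ∈ l, y ∈ V := fun y hy => hl y (by simp [hy])
    rw [List.flatten_cons] at h
    rcases List.append_eq_append_iff.1 h with ⟨c, h1, h2⟩ | ⟨c, h1, h2⟩
    · right
      refine ⟨[], v, rfl, Language.nil_mem_kstar V, c, l.flatten, h2, h1 ▸ hx,
        Language.join_mem_kstar hl'⟩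
    · rcases ih hl' c y h2.symm with ⟨h3, h4⟩ | ⟨a, b, h3, h4, h5⟩
      · left
        exact ⟨h1 ▸ kstar_append (mem_kstar_self hx) h3, h4⟩
      · right
        exact ⟨x ++ a, b, by rw [h1, h3, List.append_assoc], kstar_append (mem_kstar_self hx) h4, h5⟩

lemma finRes_star (V : Language X) (hV : FinRes V) : FinRes (V∗) := by
  refine (Set.Finite.image2 (fun (q : Prop) (T : Set (Language X)) =>
    (({y | (q ∧ y ∈ V∗) ∨ ∃ r ∈ T, y ∈ r * V∗} : Set (List X)) : Language X))
      (Set.toFinite (Set.univ : Set Prop)) hV.finite_subsets).subset ?_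
  rintro _ ⟨v, rfl⟩
  refine ⟨v ∈ V∗, trivial, {r | ∃ a b, v = a ++ b ∧ a ∈ V∗ ∧ r = V.leftQuotient b}, ?_, ?_⟩
  · rintro _ ⟨a, b, -, -, rfl⟩
    exact ⟨b, rfl⟩
  · apply Language.ext
    intro y
    rw [Language.mem_leftQuotient]
    show ((v ∈ V∗ ∧ y ∈ V∗) ∨ _) ↔ _
    constructor
    · rintro (⟨h1, h2⟩ | ⟨_, ⟨a, b, rfl, ha, rfl⟩, hy⟩)
      · exact kstar_append h1 h2
      · obtain ⟨y1, h1, y2, h2, rfl⟩ := Language.mem_mul.1 hy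
        have := kstar_append (kstar_append ha (mem_kstar_self h1)) h2
        simpa using this
    · intro h
      obtain ⟨l, hl, hlV⟩ := Language.mem_kstar.1 h
      rcases kstar_split V l hlV v y hl with h | ⟨a, b, h1, h2, y1, y2, h3, h4, h5⟩
      · exact Or.inl h
      · exact Or.inr ⟨_, ⟨a, b, h1, h2, rfl⟩, Language.mem_mul.2 ⟨y1, h4, y2, h5, h3.symm⟩⟩

lemma finRes_of_reg {L : Language X} (h : IsRegLang L) : FinRes L := by
  induction h with
  | finite W h => exact finRes_finite W h
  | union W V _ _ h1 h2 => exact finRes_union W V h1 h2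
  | concat W V _ _ h1 h2 => exact finRes_concat W V h1 h2
  | star W _ h => exact finRes_star W h

/-- transition map on residuals -/
def tr (L : Language X) (a : List X) (q : Set.range L.leftQuotient) : Set.range L.leftQuotient :=
  ⟨q.1.leftQuotient a, by
    obtain ⟨_, v, rfl⟩ := q
    exact ⟨v ++ a, Language.leftQuotient_append L v a⟩⟩

lemma tr_append (L : Language X) (a b : List X) (q) : tr L (a ++ b) q = tr L b (tr L a q) :=
  Subtype.ext (Language.leftQuotient_append _ a b)

lemma tr_congr (L : Language X) {a a' b b' : List X} (h : tr L a = tr L a') (h' : tr L b = tr L b') :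
    tr L (a ++ b) = tr L (a' ++ b') := by
  funext q
  rw [tr_append, tr_append, h, h']

lemma tr_mem (L : Language X) {a a' : List X} (h : tr L a = tr L a') (ha : a ∈ L) : a' ∈ L := by
  have := congrArg Subtype.val (congrFun h ⟨L, [], rfl⟩)
  have h2 : L.leftQuotient a = L.leftQuotient a' := this
  have h3 : [] ∈ L.leftQuotient a := by simpa using ha
  rw [h2] at h3
  simpa using h3

def prof (L : Language X) (y : List X) :
    Set ((Set.range L.leftQuotient → Set.range L.leftQuotient) ×
      (Set.range L.leftQuotient → Set.range L.leftQuotient)) :=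
  {d | ∃ a b, y = a ++ b ∧ d = (tr L a, tr L b)}

lemma prof_split (L : Language X) {y a b : List X} (h : prof L y = prof L (a ++ b)) :
    ∃ a' b', y = a' ++ b' ∧ tr L a' = tr L a ∧ tr L b' = tr L b := by
  have : (tr L a, tr L b) ∈ prof L (a ++ b) := ⟨a, b, rfl, rfl⟩
  rw [← h] at this
  obtain ⟨a', b', h1, h2⟩ := this
  rw [Prod.mk.injEq] at h2
  exact ⟨a', b', h1, h2.1.symm, h2.2.symm⟩

lemma prof_tr (L : Language X) {y y' : List X} (h : prof L y = prof L y') : tr L y = tr L y' := by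
  obtain ⟨a', b', rfl, h2, h3⟩ := prof_split L (a := []) (b := y') h
  exact tr_congr L h2 h3

lemma prof_sub (L : Language X) {y y' z z' : List X} (h : prof L y = prof L y')
    (h' : prof L z = prof L z') : prof L (y ++ z) ⊆ prof L (y' ++ z') := by
  rintro _ ⟨a, b, hab, rfl⟩
  rcases List.append_eq_append_iff.1 hab with ⟨c, h1, h2⟩ | ⟨c, h1, h2⟩
  · subst h1 h2
    obtain ⟨c', b', rfl, h3, h4⟩ := prof_split L h'.symm
    exact ⟨y' ++ c', b', by simp, by rw [tr_congr L (prof_tr L h) h3.symm, h4]⟩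
  · subst h1 h2
    obtain ⟨a', c', rfl, h3, h4⟩ := prof_split L h.symm
    exact ⟨a', c' ++ z', by simp, by rw [tr_congr L h4.symm (prof_tr L h'), h3]⟩

lemma exists_monoid (L : Language X) (hL : FinRes L) :
    ∃ (S : Type) (_ : Monoid S) (_ : Finite S) (φ : List X → S), Function.Surjective φ ∧
      (∀ a b, φ (a ++ b) = φ a * φ b) ∧ (∀ a b, φ a = φ b → prof L a = prof L b) := by
  let C : Con (FreeMonoid X) :=
    { r := fun a b => prof L a.toList = prof L b.toList
      iseqv := ⟨fun _ => rfl, fun h => h.symm, fun h h' => h.trans h'⟩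
      mul' := fun {w x y z} h h' => by
        show prof L (w.toList ++ y.toList) = prof L (x.toList ++ z.toList)
        exact (prof_sub L h h').antisymm (prof_sub L h.symm h'.symm) }
  have : Finite (Set.range L.leftQuotient) := hL
  refine ⟨C.Quotient, inferInstance, ?_, fun a => ((FreeMonoid.ofList a : FreeMonoid X) : C.Quotient), ?_, ?_, ?_⟩
  · let g : C.Quotient → Set ((Set.range L.leftQuotient → Set.range L.leftQuotient) ×
      (Set.range L.leftQuotient → Set.range L.leftQuotient)) :=
      fun q => Con.liftOn q (fun a => prof L a.toList) (fun a b h => h)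
    refine Finite.of_injective g ?_
    intro a b
    induction a using Con.induction_on
    induction b using Con.induction_on
    intro h
    exact (Con.eq C).2 h
  · intro q
    induction q using Con.induction_on with
    | H x => exact ⟨x.toList, rfl⟩
  · intro a b
    rfl
  · intro a b h
    exact (Con.eq C).1 h

lemma exists_idem_pow {S : Type} [Monoid S] [Finite S] (p : S) :
    ∃ n, 1 ≤ n ∧ p ^ n * p ^ n = p ^ n := by
  obtain ⟨i, j, hij, h⟩ : ∃ i j : ℕ, i < j ∧ p ^ i = p ^ j := by
    obtain ⟨i, j, hne, h⟩ := Finite.exists_ne_map_eq_of_infinite (fun n : ℕ => p ^ n)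
    rcases lt_or_gt_of_ne hne with h' | h'
    · exact ⟨i, j, h', h⟩
    · exact ⟨j, i, h', h.symm⟩
  obtain ⟨d, rfl⟩ := Nat.exists_eq_add_of_lt hij
  have h1 : ∀ m, i ≤ m → p ^ (m + (d + 1)) = p ^ m := by
    intro m hm
    obtain ⟨r, rfl⟩ := Nat.exists_eq_add_of_le hm
    rw [show i + r + (d + 1) = (i + d + 1) + r by ring, pow_add, ← h, ← pow_add]
  have h2 : ∀ k m, i ≤ m → p ^ (m + k * (d + 1)) = p ^ m := by
    intro k
    induction k with
    | zero => intro m _; simp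
    | succ k ih =>
      intro m hm
      rw [show m + (k + 1) * (d + 1) = (m + k * (d + 1)) + (d + 1) by ring, h1 _ (by omega), ih m hm]
  refine ⟨(i + 1) * (d + 1), Nat.mul_pos (by omega) (by omega), ?_⟩
  rw [← pow_add]
  exact h2 (i + 1) _ (by nlinarith)

/-- minimal idempotents -/
def MinIdem {S : Type} [Monoid S] (e : S) : Prop :=
  e * e = e ∧ ∀ p, e * p = p → p * e = p → ∃ n, 1 ≤ n ∧ p ^ n = e

lemma exists_minIdem (S : Type) [Monoid S] [Finite S] : ∃ e : S, MinIdem e := by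
  let f : S → ℕ := fun e => Set.ncard {x : S | e * x = x ∧ x * e = x}
  obtain ⟨e, he, hmin⟩ := Set.exists_min_image {e : S | e * e = e} f (Set.toFinite _)
    ⟨1, by simp⟩
  refine ⟨e, he, fun p hp hp' => ?_⟩
  obtain ⟨n, hn, hi⟩ := exists_idem_pow p
  refine ⟨n, hn, ?_⟩
  obtain ⟨k, rfl⟩ := Nat.exists_eq_add_of_le' hn
  have h1 : e * p ^ (k + 1) = p ^ (k + 1) := by rw [pow_succ', ← mul_assoc, hp]
  have h2 : p ^ (k + 1) * e = p ^ (k + 1) := by rw [pow_succ, mul_assoc, hp']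
  have hsub : {x : S | p ^ (k + 1) * x = x ∧ x * p ^ (k + 1) = x} ⊆ {x : S | e * x = x ∧ x * e = x} := by
    rintro x ⟨hx, hx'⟩
    constructor
    · rw [← hx, ← mul_assoc, h1]
    · rw [← hx', mul_assoc, h2]
  have := Set.eq_of_subset_of_ncard_le hsub (hmin _ hi) (Set.toFinite _)
  have he2 : e ∈ {x : S | p ^ (k + 1) * x = x ∧ x * p ^ (k + 1) = x} := by
    rw [this]; exact ⟨he, he⟩
  rw [← he2.1, h2]

lemma minIdem_of {S : Type} [Monoid S] {e₀ e a b : S} (h₀ : MinIdem e₀) (he : e * e = e)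
    (hab : e = a * e₀ * b) : MinIdem e := by
  refine ⟨he, fun p hp hp' => ?_⟩
  have hpow : ∀ n, (e₀ * b * p * a * e₀) ^ (n + 1) = e₀ * b * p ^ (n + 1) * a * e₀ := by
    intro n
    induction n with
    | zero => simp
    | succ n ih =>
      rw [pow_succ, ih]
      calc e₀ * b * p ^ (n + 1) * a * e₀ * (e₀ * b * p * a * e₀)
          = e₀ * b * p ^ (n + 1) * (a * (e₀ * e₀) * b) * p * a * e₀ := by simp only [mul_assoc]
        _ = e₀ * b * p ^ (n + 1) * (e * p) * a * e₀ := by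
            rw [h₀.1, ← hab]; simp only [mul_assoc]
        _ = _ := by rw [hp, pow_succ p (n + 1)]; simp only [mul_assoc]
  obtain ⟨n, hn, h⟩ := h₀.2 (e₀ * b * p * a * e₀) (by simp only [← mul_assoc, h₀.1])
    (by simp only [mul_assoc, h₀.1])
  obtain ⟨k, rfl⟩ := Nat.exists_eq_add_of_le' hn
  refine ⟨k + 1, hn, ?_⟩
  rw [hpow] at h
  have h1 : e * p ^ (k + 1) = p ^ (k + 1) := by rw [pow_succ', ← mul_assoc, hp]
  have h2 : p ^ (k + 1) * e = p ^ (k + 1) := by rw [pow_succ, mul_assoc, hp']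
  calc p ^ (k + 1) = e * p ^ (k + 1) * e := by rw [h1, h2]
    _ = a * (e₀ * b * p ^ (k + 1) * a * e₀) * b := by rw [hab]; simp only [mul_assoc]
    _ = e := by rw [h, hab]

lemma ramsey {S : Type} [Monoid S] [Finite S] (c : ℕ → ℕ → S)
    (hc : ∀ i j k, i ≤ j → j ≤ k → c i j * c j k = c i k) (I : Set ℕ) (d : ℕ)
    (hI : ∀ N, ∃ n ∈ I, N ≤ n) :
    ∃ (m : ℕ → ℕ) (f : S), f * f = f ∧ d ≤ m 0 ∧
      ∀ k, m k ∈ I ∧ m k + d + 1 ≤ m (k + 1) ∧ c (m k) (m (k + 1)) = f := by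
  have hne : (Filter.atTop ⊓ Filter.principal I).NeBot := by
    rw [Filter.inf_principal_neBot_iff]
    intro U hU
    obtain ⟨N, hN⟩ := Filter.mem_atTop_sets.1 hU
    obtain ⟨n, hn, hn'⟩ := hI N
    exact ⟨n, hN n hn', hn⟩
  let U := Ultrafilter.of (Filter.atTop ⊓ Filter.principal I)
  have hU : (U : Filter ℕ) ≤ Filter.atTop ⊓ Filter.principal I := Ultrafilter.of_le _
  have hUtop : (U : Filter ℕ) ≤ Filter.atTop := hU.trans inf_le_left
  have hUI : ∀ᶠ j in (U : Filter ℕ), j ∈ I := Filter.le_principal_iff.1 (hU.trans inf_le_right)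
  have key : ∀ g : ℕ → S, ∃ s, ∀ᶠ j in (U : Filter ℕ), g j = s := by
    intro g
    by_contra hcon
    push Not at hcon
    have h1 : ∀ s, ∀ᶠ j in (U : Filter ℕ), g j ≠ s := by
      intro s
      simpa using hcon s
    have h2 := Filter.eventually_all.2 h1
    obtain ⟨j, hj⟩ := h2.exists
    exact hj _ rfl
  choose g hg using fun i => key (c i)
  obtain ⟨s, hs⟩ := key g
  have step : ∀ i : {i // i ∈ I ∧ g i = s}, ∃ j : {i // i ∈ I ∧ g i = s},
      i.1 + d + 1 ≤ j.1 ∧ c i.1 j.1 = s := by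
    rintro ⟨i, hi, his⟩
    have h1 := hg i
    have h2 := hUtop (Filter.eventually_ge_atTop (i + d + 1))
    obtain ⟨j, h1, h2, h3, h4⟩ := (h1.and (Filter.Eventually.and h2 (hUI.and hs))).exists
    exact ⟨⟨j, h3, h4⟩, h2, by rw [h1, his]⟩
  obtain ⟨i₀, h0, h0', h0''⟩ :=
    (Filter.Eventually.and (hUtop (Filter.eventually_ge_atTop d)) (hUI.and hs)).exists
  choose nx hnx using step
  let m : ℕ → {i // i ∈ I ∧ g i = s} := fun k => Nat.rec ⟨i₀, h0', h0''⟩ (fun _ i => nx i) k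
  refine ⟨fun k => (m k).1, s, ?_, h0, fun k => ⟨(m k).2.1, (hnx (m k)).1, (hnx (m k)).2⟩⟩
  have h1 := hg (m 0).1
  have h2 := hg (m 1).1
  have h3 := hUtop (Filter.eventually_ge_atTop (m 1).1)
  obtain ⟨k, h1, h2, h3⟩ := (h1.and (h2.and h3)).exists
  rw [(m 0).2.2] at h1
  rw [(m 1).2.2] at h2
  have h4 := hc (m 0).1 (m 1).1 k (by have := (hnx (m 0)).1; change (m 0).1 + d + 1 ≤ (m 1).1 at this; omega) h3
  have h5 : c (m 0).1 (m 1).1 = s := (hnx (m 0)).2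
  rwa [h1, h2, h5] at h4

/-- segment of an ω-word -/
def seg (ξ : ℕ → X) (i j : ℕ) : List X := (List.range' i (j - i)).map ξ

lemma seg_length (ξ : ℕ → X) (i j : ℕ) : (seg ξ i j).length = j - i := by simp [seg]

lemma seg_append (ξ : ℕ → X) {i j k : ℕ} (h : i ≤ j) (h' : j ≤ k) :
    seg ξ i j ++ seg ξ j k = seg ξ i k := by
  obtain ⟨a, rfl⟩ := Nat.exists_eq_add_of_le h
  obtain ⟨b, rfl⟩ := Nat.exists_eq_add_of_le h'
  unfold seg
  rw [← List.map_append, show i + a - i = a by omega, show i + a + b - (i + a) = b by omega,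
    show i + a + b - i = a + b by omega, List.range'_append_1]

lemma seg_self (ξ : ℕ → X) (i : ℕ) : seg ξ i i = [] := by simp [seg]

lemma seg_split (ξ : ℕ → X) {i j : ℕ} (h : i ≤ j) {a b : List X} (hab : seg ξ i j = a ++ b) :
    i + a.length + b.length = j ∧ seg ξ i (i + a.length) = a ∧ seg ξ (i + a.length) j = b := by
  have hl : j - i = a.length + b.length := by rw [← seg_length ξ, hab, List.length_append]
  have h1 : i + a.length + b.length = j := by omega
  refine ⟨h1, ?_⟩
  rw [← seg_append ξ (Nat.le_add_right i a.length) (by omega : i + a.length ≤ j)] at hab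
  exact List.append_inj hab (by rw [seg_length]; omega)

lemma wcat_get (w : List X) (η : ℕ → X) (n : ℕ) : wcat w η (w.length + n) = η n := by
  induction w with
  | nil => simp [wcat, Stream'.appendStream']
  | cons x w ih =>
    rw [List.length_cons, show w.length + 1 + n = (w.length + n) + 1 by ring]
    exact ih

lemma wcat_seg (w : List X) (η : ℕ → X) : seg (wcat w η) 0 w.length = w := by
  induction w with
  | nil => simp [seg]
  | cons x w ih =>
    unfold seg at ih ⊢
    rw [List.length_cons, Nat.sub_zero, List.range'_succ, List.map_cons]
    congr 1
    rw [List.range'_eq_map_range, List.map_map]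
    rw [Nat.sub_zero, List.range'_eq_map_range, List.map_map] at ih
    conv_rhs => rw [← ih]
    apply List.map_congr_left
    intro n _
    show wcat (x :: w) η (0 + 1 + n) = wcat w η (0 + n)
    rw [show 0 + 1 + n = (0 + n) + 1 by ring]
    rfl

lemma seg_get {ξ : ℕ → X} {i j : ℕ} {w : List X} (h : seg ξ i j = w) (n : ℕ) (hn : n < w.length) :
    ξ (i + n) = w[n] := by
  subst h
  simp [seg]

lemma mem_cyl {ξ : ℕ → X} {w : List X} : ξ ∈ cyl w ↔ seg ξ 0 w.length = w := by
  constructor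
  · rintro ⟨η, rfl⟩
    exact wcat_seg w η
  · intro h
    refine ⟨fun n => ξ (w.length + n), ?_⟩
    funext n
    rcases lt_or_ge n w.length with hn | hn
    · have h1 := seg_get h n hn
      have h2 := seg_get (wcat_seg w (fun n => ξ (w.length + n))) n hn
      rw [zero_add] at h1 h2
      rw [h1, h2]
    · obtain ⟨k, rfl⟩ := Nat.exists_eq_add_of_le hn
      rw [wcat_get]

lemma seg_wcat (w : List X) (η : ℕ → X) (i j : ℕ) :
    seg (wcat w η) (w.length + i) (w.length + j) = seg η i j := by
  unfold seg
  rw [show w.length + j - (w.length + i) = j - i by omega, List.range'_eq_map_range,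
    List.range'_eq_map_range, List.map_map, List.map_map]
  apply List.map_congr_left
  intro n _
  show wcat w η (w.length + i + n) = η (i + n)
  rw [add_assoc, wcat_get]

/-- `t` occurs infinitely often. -/
def InfOcc (t : List X) : Set (ℕ → X) := {ξ | ∀ N, ∃ n, N ≤ n ∧ seg ξ n (n + t.length) = t}

lemma omegaPow_of_cuts (V : Language X) (ξ : ℕ → X) (c : ℕ → ℕ) (hc : ∀ k, c k ≤ c (k + 1))
    (hk : ∀ k, k ≤ c k) (h0 : seg ξ 0 (c 0) ∈ V∗) (hs : ∀ k, seg ξ (c k) (c (k + 1)) ∈ V∗) :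
    ξ ∈ omegaPow V := by
  let P : ℕ → Prop := fun m => ∃ k, m ≤ c k ∧ seg ξ m (c k) ∈ (V∗)
  have ext : ∀ m k d, m ≤ c k → seg ξ m (c k) ∈ V∗ → m ≤ c (k + d) ∧ seg ξ m (c (k + d)) ∈ V∗ := by
    intro m k d h1 h2
    induction d with
    | zero => exact ⟨h1, h2⟩
    | succ d ih =>
      have := hc (k + d)
      refine ⟨ih.1.trans this, ?_⟩
      rw [← add_assoc, ← seg_append ξ ih.1 this]
      exact kstar_append ih.2 (hs _)
  have step : ∀ m : {m // P m}, ∃ m' : {m // P m}, m.1 < m'.1 ∧ seg ξ m.1 m'.1 ∈ V := by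
    rintro ⟨m, k, h1, h2⟩
    obtain ⟨h3, h4⟩ := ext m k (m + 1) h1 h2
    have h5 := hk (k + (m + 1))
    obtain ⟨l, hl, hlV⟩ := Language.mem_kstar_iff_exists_nonempty.1 h4
    cases l with
    | nil =>
      have := congrArg List.length hl
      rw [seg_length] at this
      simp at this
      omega
    | cons v l =>
      rw [List.flatten_cons] at hl
      obtain ⟨e1, e2, e3⟩ := seg_split ξ h3 hl
      have hv := hlV v (by simp)
      refine ⟨⟨m + v.length, k + (m + 1), by omega, ?_⟩, ?_, ?_⟩
      · rw [e3]
        exact Language.join_mem_kstar fun y hy => (hlV y (by simp [hy])).1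
      · have := List.length_pos_iff.2 hv.2
        show m < m + v.length
        omega
      · show seg ξ m (m + v.length) ∈ V
        rw [e2]; exact hv.1
  choose nx hnx using step
  let m : ℕ → {m // P m} := fun k => Nat.rec ⟨0, 0, Nat.zero_le _, h0⟩ (fun _ i => nx i) k
  have hm : ∀ k, (m k).1 < (m (k + 1)).1 ∧ seg ξ (m k).1 (m (k + 1)).1 ∈ V := fun k => hnx (m k)
  refine ⟨fun k => seg ξ (m k).1 (m (k + 1)).1, fun i => ⟨(hm i).2, ?_⟩, fun k => ?_⟩
  · intro h
    have := congrArg List.length h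
    rw [seg_length, List.length_nil] at this
    have h2 := (hm i).1
    omega
  · have : ((List.range k).map (fun k => seg ξ (m k).1 (m (k + 1)).1)).flatten = seg ξ 0 (m k).1 := by
      induction k with
      | zero => simp [m, seg_self]
      | succ k ih =>
        rw [List.range_succ, List.map_append, List.flatten_append, ih]
        simp only [List.map_cons, List.map_nil, List.flatten_cons, List.flatten_nil, List.append_nil]
        exact seg_append ξ (Nat.zero_le _) (hm k).1.le
    rw [this, mem_cyl, seg_length, Nat.sub_zero]

lemma key_s7 (V : Language X) (hV : IsRegLang V) :
    ∃ t₀ : List X, (∀ ξ ∈ omegaPow V, ∀ n, seg ξ n (n + t₀.length) ≠ t₀) ∨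
      ∃ w₀ τ : List X, cyl w₀ ∩ InfOcc τ ⊆ omegaPow V := by
  obtain ⟨S, _, _, φ, hsurj, hmul, hprof⟩ := exists_monoid (V∗) (finRes_of_reg (.star V hV))
  obtain ⟨e₀, he₀⟩ := exists_minIdem S
  obtain ⟨t₀, rfl⟩ := hsurj e₀
  refine ⟨t₀, ?_⟩
  by_cases hcase : ∀ ξ ∈ omegaPow V, ∀ n, seg ξ n (n + t₀.length) ≠ t₀
  · exact Or.inl hcase
  right
  push Not at hcase
  obtain ⟨ξ, ⟨f, hf, hcyl⟩, n, hn⟩ := hcase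
  -- a word `x ∈ V∗` containing `t₀`
  obtain ⟨x, hx, a, b, hab⟩ : ∃ x ∈ V∗, ∃ a b, x = a ++ t₀ ++ b := by
    set K := n + t₀.length with hK
    refine ⟨((List.range K).map f).flatten, ?_, ?_⟩
    · refine Language.join_mem_kstar fun y hy => ?_
      obtain ⟨i, -, rfl⟩ := List.mem_map.1 hy
      exact (hf i).1
    · have hlen : ∀ k, k ≤ (((List.range k).map f).flatten).length := by
        intro k
        induction k with
        | zero => simp
        | succ k ih =>
          rw [List.range_succ, List.map_append, List.flatten_append, List.length_append]
          have := List.length_pos_iff.2 (hf k).2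
          simp only [List.map_cons, List.map_nil, List.flatten_cons, List.flatten_nil, List.append_nil]
          omega
      have h1 := mem_cyl.1 (hcyl K)
      have h2 := hlen K
      refine ⟨seg ξ 0 n, seg ξ K (((List.range K).map f).flatten).length, ?_⟩
      rw [← hn, seg_append ξ (Nat.zero_le _) (by omega), seg_append ξ (Nat.zero_le _) h2, h1]
  obtain ⟨N, hN, hidem⟩ := exists_idem_pow (φ x)
  have hpw : ∀ k, ∃ t ∈ V∗, φ t = φ x ^ (k + 1) := by
    intro k
    induction k with
    | zero => exact ⟨x, hx, by simp⟩
    | succ k ih =>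
      obtain ⟨t, ht, h⟩ := ih
      exact ⟨t ++ x, kstar_append ht hx, by rw [hmul, h, ← pow_succ]⟩
  obtain ⟨k, rfl⟩ := Nat.exists_eq_add_of_le' hN
  obtain ⟨t, ht, htx⟩ := hpw k
  rw [← htx] at hidem
  have hmin : MinIdem (φ t) := by
    refine minIdem_of (a := φ a) (b := φ b * φ x ^ k) he₀ hidem ?_
    rw [htx, pow_succ']
    conv_lhs => rw [hab, hmul, hmul]
    simp only [mul_assoc]
    rw [← hmul, ← hmul, ← List.append_assoc, ← hab]
  clear hpw htx hN
  refine ⟨t, t ++ t, ?_⟩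
  rintro η ⟨hη, hio⟩
  rw [mem_cyl] at hη
  set l := t.length with hl
  obtain ⟨m, g, hg, hm0, hm⟩ := ramsey (fun i j => φ (seg η i j))
    (fun i j k h h' => by rw [← hmul, seg_append η h h'])
    {n | l ≤ n ∧ seg η (n - l) n = t ∧ seg η n (n + l) = t} l (by
      intro M
      obtain ⟨n, hn, hn'⟩ := hio M
      have := seg_split η (by omega) hn'
      simp only [List.length_append, ← hl] at this
      refine ⟨n + l, ⟨by omega, ?_, ?_⟩, by omega⟩
      · rw [Nat.add_sub_cancel]; exact this.2.1
      · rw [add_assoc]; exact this.2.2)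
  -- `g` is absorbed
  have pre : ∀ i j, i + l ≤ j → seg η i (i + l) = t → φ t * φ (seg η i j) = φ (seg η i j) := by
    intro i j hij h
    rw [← seg_append η (Nat.le_add_right i l) hij, h, hmul, ← mul_assoc, hidem]
  have suf : ∀ i j, i + l ≤ j → seg η (j - l) j = t → φ (seg η i j) * φ t = φ (seg η i j) := by
    intro i j hij h
    rw [← seg_append η (by omega : i ≤ j - l) (by omega), h, hmul, mul_assoc, hidem]
  have hge : g = φ t := by
    have h0 := hm 0
    have h1 := hm 1
    have e1 := pre (m 0) (m 1) (by have := h0.2.1; rw [zero_add] at this; omega) h0.1.2.2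
    have e2 := suf (m 0) (m 1) (by have := h0.2.1; rw [zero_add] at this; omega) h1.1.2.1
    have e3 : φ (seg η (m 0) (m 1)) = g := h0.2.2
    rw [e3] at e1 e2
    obtain ⟨n, hn, h⟩ := hmin.2 g e1 e2
    rw [← h]
    exact (IsIdempotentElem.pow_eq hg (by omega)).symm
  subst hge
  set y₀ := seg η 0 (m 0) with hy₀
  have e1 : φ t * φ y₀ = φ y₀ := pre 0 (m 0) (by omega) (by rw [zero_add]; exact hη)
  have e2 : φ y₀ * φ t = φ y₀ := suf 0 (m 0) (by omega) (hm 0).1.2.1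
  obtain ⟨r, hr, hpr⟩ := hmin.2 _ e1 e2
  obtain ⟨r, rfl⟩ := Nat.exists_eq_add_of_le' hr
  obtain ⟨Q, hQ⟩ := hsurj (φ y₀ ^ r)
  have hsp : ∀ k, ∃ α β, seg η (m k) (m (k + 1)) = α ++ β ∧ tr (V∗) α = tr (V∗) Q ∧
      tr (V∗) β = tr (V∗) (t ++ y₀) := by
    intro k
    apply prof_split
    apply hprof
    rw [(hm k).2.2, hmul, hmul, hQ, e1, ← pow_succ, hpr]
  choose α β hαβ hα hβ using hsp
  have hcut := fun k => seg_split η (by have := (hm k).2.1; omega) (hαβ k)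
  have hmk : ∀ k, k ≤ m k := by
    intro k
    induction k with
    | zero => exact Nat.zero_le _
    | succ k ih => have := (hm k).2.1; omega
  have hyQ : φ (y₀ ++ Q) = φ t := by rw [hmul, hQ, ← pow_succ', hpr]
  refine omegaPow_of_cuts V η (fun k => m k + (α k).length) ?_ ?_ ?_ ?_
  · intro k
    have := (hcut k).1
    show m k + (α k).length ≤ m (k + 1) + (α (k + 1)).length
    omega
  · intro k
    have := hmk k
    show k ≤ m k + (α k).length
    omega
  · show seg η 0 (m 0 + (α 0).length) ∈ (V∗)
    rw [← seg_append η (Nat.zero_le (m 0)) (Nat.le_add_right _ _), (hcut 0).2.1]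
    refine tr_mem (V∗) (a := t) ?_ ht
    rw [← prof_tr (V∗) (hprof _ _ hyQ)]
    exact tr_congr (V∗) rfl (hα 0).symm
  · intro k
    show seg η (m k + (α k).length) (m (k + 1) + (α (k + 1)).length) ∈ (V∗)
    have := (hcut k).1
    rw [← seg_append η (by omega : _ ≤ m (k + 1)) (Nat.le_add_right _ _), (hcut k).2.2,
      (hcut (k + 1)).2.1]
    refine tr_mem (V∗) (a := t) ?_ ht
    have h : φ (t ++ y₀ ++ Q) = φ t := by rw [List.append_assoc, hmul, hyQ, hidem]
    rw [← prof_tr (V∗) (hprof _ _ h)]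
    exact tr_congr (V∗) (hβ k).symm (hα (k + 1)).symm

def Det (n : ℕ) (B : Set (ℕ → X)) : Prop := ∀ ξ ξ', seg ξ 0 n = seg ξ' 0 n → ξ ∈ B → ξ' ∈ B

def occAt (t : List X) (n : ℕ) : Set (ℕ → X) := {ξ | seg ξ n (n + t.length) = t}

lemma mem_cyl_append {ξ : ℕ → X} {w t : List X} :
    ξ ∈ cyl (w ++ t) ↔ ξ ∈ cyl w ∧ ξ ∈ occAt t w.length := by
  rw [mem_cyl, mem_cyl]
  constructor
  · intro h
    have := seg_split ξ (Nat.zero_le _) h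
    simp only [zero_add, List.length_append] at this
    exact this.2
  · rintro ⟨h1, h2⟩
    rw [List.length_append, ← seg_append ξ (Nat.zero_le w.length) (Nat.le_add_right _ _), h1, h2]

lemma det_finset [Fintype X] {n : ℕ} {B : Set (ℕ → X)} (hB : Det n B) :
    ∃ Fs : Finset (List X), (∀ w ∈ Fs, w.length = n) ∧ B = ⋃ w ∈ Fs, cyl w := by
  have hfin : ({w : List X | w.length = n ∧ ∃ ξ ∈ B, seg ξ 0 n = w}).Finite :=
    (List.finite_length_eq X n).subset fun w hw => hw.1
  refine ⟨hfin.toFinset, fun w hw => ((hfin.mem_toFinset).1 hw).1, ?_⟩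
  ext ξ
  simp only [Set.mem_iUnion, exists_prop, hfin.mem_toFinset]
  constructor
  · intro h
    refine ⟨seg ξ 0 n, ⟨by rw [seg_length, Nat.sub_zero], ξ, h, rfl⟩, ?_⟩
    rw [mem_cyl, seg_length, Nat.sub_zero]
  · rintro ⟨w, ⟨h1, ξ', h2, h3⟩, h4⟩
    rw [mem_cyl, h1] at h4
    exact hB ξ' ξ (by rw [h3, h4]) h2

lemma det_meas [Fintype X] [MeasurableSpace (ℕ → X)] (hmeas : ∀ w : List X, MeasurableSet (cyl w))
    {n : ℕ} {B : Set (ℕ → X)} (hB : Det n B) : MeasurableSet B := by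
  obtain ⟨Fs, -, rfl⟩ := det_finset hB
  exact Finset.measurableSet_biUnion _ fun w _ => hmeas w

lemma det_lower [Fintype X] [MeasurableSpace (ℕ → X)] (μ : Measure (ℕ → X))
    (hmeas : ∀ w : List X, MeasurableSet (cyl w)) (δ : ENNReal) (t : List X)
    (hδ : ∀ w, δ * μ (cyl w) ≤ μ (cyl (w ++ t))) {n : ℕ} {B : Set (ℕ → X)} (hB : Det n B) :
    δ * μ B ≤ μ (B ∩ occAt t n) := by
  obtain ⟨Fs, hFs, rfl⟩ := det_finset hB
  calc δ * μ (⋃ w ∈ Fs, cyl w) ≤ δ * ∑ w ∈ Fs, μ (cyl w) := by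
        gcongr; exact measure_biUnion_finset_le _ _
    _ = ∑ w ∈ Fs, δ * μ (cyl w) := Finset.mul_sum _ _ _
    _ ≤ ∑ w ∈ Fs, μ (cyl (w ++ t)) := Finset.sum_le_sum fun w _ => hδ w
    _ = μ (⋃ w ∈ Fs, cyl (w ++ t)) := by
        rw [measure_biUnion_finset _ fun w _ => hmeas _]
        intro w hw w' hw' hne
        refine Set.disjoint_left.2 fun ξ h h' => hne ?_
        have h1 := mem_cyl.1 (mem_cyl_append.1 h).1
        have h2 := mem_cyl.1 (mem_cyl_append.1 h').1
        rw [hFs w hw] at h1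
        rw [hFs w' hw'] at h2
        rw [← h1, ← h2]
    _ ≤ _ := by
        apply measure_mono
        intro ξ hξ
        simp only [Set.mem_iUnion, exists_prop] at hξ
        obtain ⟨w, hw, h⟩ := hξ
        have := mem_cyl_append.1 h
        rw [hFs w hw] at this
        exact ⟨by simp only [Set.mem_iUnion, exists_prop]; exact ⟨w, hw, this.1⟩, this.2⟩

lemma null_late [Fintype X] [MeasurableSpace (ℕ → X)] (μ : Measure (ℕ → X)) (hfin : μ Set.univ < ⊤)
    (hmeas : ∀ w : List X, MeasurableSet (cyl w)) (δ : ENNReal) (hδ0 : δ ≠ 0) (t : List X)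
    (hδ : ∀ w, δ * μ (cyl w) ≤ μ (cyl (w ++ t))) (N : ℕ) :
    μ {ξ | ∀ n, N ≤ n → seg ξ n (n + t.length) ≠ t} = 0 := by
  set E : Set (ℕ → X) := {ξ | ∀ n, N ≤ n → seg ξ n (n + t.length) ≠ t} with hE
  let B : ℕ → Set (ℕ → X) := fun k => {ξ | ∀ j < k, ξ ∉ occAt t (N + j * t.length)}
  have hEB : ∀ k, E ⊆ B k := fun k ξ h j _ => h _ (Nat.le_add_right _ _)
  have hdet : ∀ k, Det (N + k * t.length) (B k) := by
    intro k ξ ξ' h hξ j hj hocc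
    refine hξ j hj ?_
    have hle : N + j * t.length + t.length ≤ N + k * t.length := by nlinarith
    have hsub : seg ξ (N + j * t.length) (N + j * t.length + t.length) =
        seg ξ' (N + j * t.length) (N + j * t.length + t.length) := by
      rw [← seg_append ξ (Nat.zero_le (N + j * t.length + t.length)) hle,
        ← seg_append ξ' (Nat.zero_le (N + j * t.length + t.length)) hle] at h
      have h2 := (List.append_inj h (by rw [seg_length, seg_length])).1
      rw [← seg_append ξ (Nat.zero_le (N + j * t.length)) (Nat.le_add_right _ _),
        ← seg_append ξ' (Nat.zero_le (N + j * t.length)) (Nat.le_add_right _ _)] at h2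
      exact (List.append_inj h2 (by rw [seg_length, seg_length])).2
    show seg ξ _ _ = t
    rw [hsub]; exact hocc
  have hind : ∀ k : ℕ, k * (δ * μ E) + μ (B k) ≤ μ Set.univ := by
    intro k
    induction k with
    | zero => simpa using measure_mono (Set.subset_univ _)
    | succ k ih =>
      refine le_trans ?_ ih
      have h1 : δ * μ E ≤ μ (B k ∩ occAt t (N + k * t.length)) :=
        (mul_le_mul_right (measure_mono (hEB k)) δ).trans (det_lower μ hmeas δ t hδ (hdet k))
      have h2 : μ (B k ∩ occAt t (N + k * t.length)) + μ (B (k + 1)) ≤ μ (B k) := by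
        rw [← measure_union]
        · apply measure_mono
          rintro ξ (h | h)
          · exact h.1
          · exact fun j hj => h j (by omega)
        · exact Set.disjoint_left.2 fun ξ h h' => h' k (by omega) h.2
        · exact det_meas hmeas (hdet (k + 1))
      push_cast
      rw [add_mul, one_mul, add_assoc]
      gcongr
      exact le_trans (by gcongr) h2
  have hz : δ * μ E = 0 := by
    by_contra hne
    obtain ⟨k, hk⟩ := ENNReal.exists_nat_mul_gt hne hfin.ne
    exact absurd ((le_self_add).trans (hind k)) (not_le.2 hk)
  exact (mul_eq_zero.1 hz).resolve_left hδ0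

lemma pos_ball [Fintype X] [MeasurableSpace (ℕ → X)] (μ : Measure (ℕ → X)) (hfin : μ Set.univ < ⊤)
    (hmeas : ∀ w : List X, MeasurableSet (cyl w)) (hpos : ∀ w : List X, 0 < μ (cyl w))
    (c : ENNReal) (hc0 : 0 < c)
    (hc : ∀ (w : List X) (x : X), μ (cyl (w ++ [x])) = 0 ∨ c * μ (cyl w) ≤ μ (cyl (w ++ [x])))
    (w t : List X) : 0 < μ (cyl w ∩ InfOcc t) := by
  have hδ : ∀ t w : List X, c ^ t.length * μ (cyl w) ≤ μ (cyl (w ++ t)) := by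
    intro t
    induction t with
    | nil => intro w; simp
    | cons x t ih =>
      intro w
      have h1 := (hc w x).resolve_left (hpos _).ne'
      have h2 := ih (w ++ [x])
      rw [List.append_assoc, List.singleton_append] at h2
      refine le_trans ?_ h2
      rw [List.length_cons, pow_succ, mul_assoc]
      gcongr
  have hnull : μ (InfOcc t)ᶜ = 0 := by
    have : (InfOcc t)ᶜ ⊆ ⋃ N, {ξ : ℕ → X | ∀ n, N ≤ n → seg ξ n (n + t.length) ≠ t} := by
      intro ξ h
      simp only [InfOcc, Set.mem_compl_iff, Set.mem_setOf_eq] at h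
      push Not at h
      obtain ⟨N, hN⟩ := h
      exact Set.mem_iUnion.2 ⟨N, hN⟩
    refine measure_mono_null this (measure_iUnion_null fun N => ?_)
    exact null_late μ hfin hmeas (c ^ t.length) (pow_ne_zero _ hc0.ne') t (hδ t) N
  rw [pos_iff_ne_zero]
  intro h
  refine (hpos w).ne' (measure_mono_null ?_ (measure_union_null h hnull))
  intro ξ hξ
  by_cases h' : ξ ∈ InfOcc t
  · exact Or.inl ⟨hξ, h'⟩
  · exact Or.inr h'

lemma isOpen_occAt (t : List X) (n : ℕ) : @IsOpen _ (cantorTop X) (occAt t n) := by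
  letI : TopologicalSpace X := ⊥
  haveI : DiscreteTopology X := ⟨rfl⟩
  show IsOpen (occAt t n)
  rw [isOpen_pi_iff]
  intro ξ hξ
  refine ⟨Finset.range (n + t.length), fun i => {ξ i}, fun i _ => ⟨isOpen_discrete _, rfl⟩, ?_⟩
  intro ξ' h
  show seg ξ' _ _ = t
  refine Eq.trans ?_ (show seg ξ n (n + t.length) = t from hξ)
  unfold seg
  apply List.map_congr_left
  intro i hi
  rw [List.mem_range'_1] at hi
  have := h i (by simp; omega)
  simpa using this

lemma cyl_eq (w : List X) : cyl w = occAt w 0 := by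
  ext ξ
  rw [mem_cyl]
  show _ ↔ seg ξ 0 (0 + w.length) = w
  rw [zero_add]

lemma isMeagre_compl_infOcc [Nonempty X] (t : List X) : @IsMeagre _ (cantorTop X) (InfOcc t)ᶜ := by
  letI := cantorTop X
  have h : InfOcc t = ⋂ N : ℕ, ⋃ n ≥ N, occAt t n := by
    ext ξ
    simp only [InfOcc, Set.mem_setOf_eq, Set.mem_iInter, Set.mem_iUnion, occAt, exists_prop, ge_iff_le]
  rw [IsMeagre, compl_compl, h, countable_iInter_mem]
  intro N
  refine residual_of_dense_open (isOpen_biUnion fun n _ => isOpen_occAt t n) ?_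
  intro ξ
  rw [mem_closure_iff]
  intro U hU hξ
  have : ∃ M, ∀ ξ', seg ξ' 0 M = seg ξ 0 M → ξ' ∈ U := by
    letI : TopologicalSpace X := ⊥
    have hU' : @IsOpen _ (@Pi.topologicalSpace ℕ (fun _ => X) (fun _ => ⊥)) U := hU
    rw [isOpen_pi_iff] at hU'
    obtain ⟨I, u, h1, h2⟩ := hU' ξ hξ
    refine ⟨I.sup id + 1, fun ξ' h' => h2 fun i hi => ?_⟩
    have hi' : i < I.sup id + 1 := Nat.lt_succ_of_le (Finset.le_sup (f := id) hi)
    have := seg_get h' i (by rw [seg_length]; omega)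
    have h3 := seg_get (rfl : seg ξ 0 (I.sup id + 1) = _) i (by rw [seg_length]; omega)
    rw [zero_add] at this h3
    rw [this, ← h3]
    exact (h1 i hi).2
  obtain ⟨M, hM⟩ := this
  obtain ⟨x⟩ := ‹Nonempty X›
  let w := seg ξ 0 (M + N)
  have hw : w.length = M + N := by simp [w, seg_length]
  have hmem : wcat (w ++ t) (fun _ => x) ∈ cyl (w ++ t) := ⟨_, rfl⟩
  obtain ⟨h1, h2⟩ := mem_cyl_append.1 hmem
  refine ⟨wcat (w ++ t) (fun _ => x), hM _ ?_, Set.mem_biUnion (by show N ≤ w.length; omega) h2⟩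
  rw [mem_cyl, hw] at h1
  have h3 : seg (wcat (w ++ t) fun _ => x) 0 (M + N) = seg ξ 0 (M + N) := h1
  rw [← seg_append _ (Nat.zero_le M) (Nat.le_add_right M N),
    ← seg_append ξ (Nat.zero_le M) (Nat.le_add_right M N)] at h3
  exact (List.append_inj h3 (by rw [seg_length, seg_length])).1

theorem stmt7 {X : Type} [Fintype X] (hX : 2 ≤ Fintype.card X)
    (F : Set (ℕ → X)) (hreg : IsRegOmega F)
    (hμ : ∃ μ : @MeasureTheory.Measure (ℕ → X) (cantorBorel X),
      FiniteNonNull μ ∧ FullSupport μ ∧ Balanced μ ∧ μ F = 0) :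
    @IsMeagre _ (cantorTop X) F := by
  obtain ⟨n, W, V, hWV, rfl⟩ := hreg
  obtain ⟨μ, ⟨-, hfin⟩, hsupp, ⟨c, hc0, hc⟩, hnull⟩ := hμ
  have hne : Nonempty X := Fintype.card_pos_iff.1 (by omega)
  have hpos : ∀ w : List X, 0 < μ (cyl w) := by
    intro w
    apply hsupp
    · rw [cyl_eq]; exact isOpen_occAt w 0
    · exact ⟨wcat w (fun _ => hne.some), _, rfl⟩
  have hmeas : ∀ w : List X, @MeasurableSet _ (cantorBorel X) (cyl w) := by
    intro w
    rw [cyl_eq]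
    exact MeasurableSpace.measurableSet_generateFrom (isOpen_occAt w 0)
  have main : ∀ i, @IsMeagre _ (cantorTop X) (catOmega (W i) (omegaPow (V i))) := by
    intro i
    obtain ⟨t₀, h | ⟨w₀, τ, h⟩⟩ := key_s7 (V i) (hWV i).2
    · refine @IsMeagre.mono _ (cantorTop X) _ _ ?_ (isMeagre_compl_infOcc t₀)
      rintro _ ⟨w, -, η, hη, rfl⟩ hio
      obtain ⟨m, hm, hm'⟩ := hio w.length
      obtain ⟨k, rfl⟩ := Nat.exists_eq_add_of_le hm
      rw [add_assoc, seg_wcat] at hm'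
      exact h η hη k hm'
    · rcases (catOmega (W i) (omegaPow (V i))).eq_empty_or_nonempty with h0 | ⟨_, w, hw, -⟩
      · rw [h0]; exact @IsMeagre.empty _ (cantorTop X)
      · exfalso
        have hp := @pos_ball X _ (cantorBorel X) μ hfin hmeas hpos c hc0 hc (w ++ w₀) τ
        refine hp.ne' (measure_mono_null ?_ hnull)
        rintro ξ ⟨h1, h2⟩
        refine Set.mem_iUnion.2 ⟨i, w, hw, ?_⟩
        obtain ⟨η, rfl⟩ := (mem_cyl_append.1 h1).1
        refine ⟨η, h ⟨?_, ?_⟩, rfl⟩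
        · have := (mem_cyl_append.1 h1).2
          rw [mem_cyl]
          have h3 : seg (wcat w η) (w.length + 0) (w.length + w₀.length) = w₀ := this
          rwa [seg_wcat] at h3
        · intro N
          obtain ⟨m, hm, hm'⟩ := h2 (w.length + N)
          obtain ⟨k, rfl⟩ := Nat.exists_eq_add_of_le (show w.length ≤ m by omega)
          rw [add_assoc, seg_wcat] at hm'
          exact ⟨k, by omega, hm'⟩
  letI := cantorTop X
  exact isMeagre_iUnion main

end AutoBaire
end
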